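/- Fix an even integer d ≥ 2 and an integer n ≥ 2. The number of loopless generalized chord diagrams of order (n,d) that are invariant under the reflection i ↦ −i (mod n·d) (a reflection with exactly two fixed points, since n·d is even) equals Σ_{k=0}^{d/2−1} C(d(n−1)/2 − 1 − k, d/2 − 1 − k) · ã(d(n−1)/2, k; 2, d). -/

import Mathlib

/-- A generalized linear diagram on points `1,…,N` whose blocks all have size `d`:
a partition of `{1,…,N}` into blocks of size `d`. -/
def IsLinearDiagram (N d : ℕ) (P : Finset (Finset ℕ)) : Prop :=
  (∀ b ∈ P, b.card = d) ∧ (∀ b ∈ P, ∀ x ∈ b, x ∈ Finset.Icc 1 N) ∧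
    ∀ x ∈ Finset.Icc 1 N, ∃! b : Finset ℕ, b ∈ P ∧ x ∈ b

/-- The number of loops of a linear diagram on points `1,…,N`: indices `i` with
`1 ≤ i ≤ N - 1` such that `i` and `i + 1` lie in the same block. -/
noncomputable def linLoops (N : ℕ) (P : Finset (Finset ℕ)) : ℕ :=
  Set.ncard {i : ℕ | 1 ≤ i ∧ i + 1 ≤ N ∧ ∃ b ∈ P, i ∈ b ∧ i + 1 ∈ b}

/-- `numA d n k` : the number of generalized linear diagrams of order `(n,d)`
with exactly `k` loops. -/
noncomputable def numA (d n k : ℕ) : ℕ :=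
  Set.ncard {P : Finset (Finset ℕ) | IsLinearDiagram (n * d) d P ∧ linLoops (n * d) P = k}

/-- `numA` with an integer loop index, zero for negative indices. -/
noncomputable def numAZ (d n : ℕ) (k : ℤ) : ℕ :=
  if 0 ≤ k then numA d n k.toNat else 0

/-- Binomial coefficient with integer arguments: `0` when `y < 0` or `y > x`. -/
def iChoose (x y : ℤ) : ℕ :=
  if 0 ≤ y ∧ y ≤ x then x.toNat.choose y.toNat else 0

/-- A generalized chord diagram on `ZMod N` whose blocks all have size `d`:
a partition of `ZMod N` into blocks of size `d`. -/
def IsChordDiagram (N d : ℕ) (P : Finset (Finset (ZMod N))) : Prop :=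
  (∀ b ∈ P, b.card = d) ∧ ∀ x : ZMod N, ∃! b : Finset (ZMod N), b ∈ P ∧ x ∈ b

/-- A chord diagram is loopless if no residues `i`, `i+1` lie in the same block. -/
def ChordLoopless (N : ℕ) (P : Finset (Finset (ZMod N))) : Prop :=
  ∀ i : ZMod N, ∀ b ∈ P, i ∈ b → i + 1 ∈ b → False

/-- `numB d n` : the number of loopless generalized chord diagrams of order `(n,d)`. -/
noncomputable def numB (d n : ℕ) : ℕ :=
  Set.ncard {P : Finset (Finset (ZMod (n * d))) |
    IsChordDiagram (n * d) d P ∧ ChordLoopless (n * d) P}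

/-- The shift `i ↦ i + v` modulo `M`, on the representatives `1,…,M`. -/
def shiftMod (M v i : ℕ) : ℕ := if i + v ≤ M then i + v else i + v - M

/-- An `m`-symmetric linear diagram with sector size `v` and blocks of size `d`:
a partition of `{1,…,m·v}` into blocks of size `d` invariant under the shift by `v`
modulo `m·v`. -/
def IsMSymLinear (d m v : ℕ) (P : Finset (Finset ℕ)) : Prop :=
  IsLinearDiagram (m * v) d P ∧ ∀ b ∈ P, b.image (shiftMod (m * v) v) ∈ P

/-- The number of loops lying in sector `s` (sectors numbered from `0`):
indices `i` with `s·v + 1 ≤ i ≤ (s+1)·v - 1` such that `i` and `i + 1` lie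
in the same block. -/
noncomputable def sectorLoops (v : ℕ) (P : Finset (Finset ℕ)) (s : ℕ) : ℕ :=
  Set.ncard {i : ℕ | s * v + 1 ≤ i ∧ i + 1 ≤ (s + 1) * v ∧ ∃ b ∈ P, i ∈ b ∧ i + 1 ∈ b}

/-- `numAtil d m v k` : the number of `m`-symmetric linear diagrams with sector size `v`,
blocks of size `d`, and exactly `k` loops in each sector (`ã(v,k;m,d)`). -/
noncomputable def numAtil (d m v k : ℕ) : ℕ :=
  Set.ncard {P : Finset (Finset ℕ) |
    IsMSymLinear d m v P ∧ ∀ s < m, sectorLoops v P s = k}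

/-!
Let `P` be a loopless diagram invariant under the reflection. The block through the fixed point `0`
is itself invariant and has even size, so it also contains the other fixed point `n * d / 2`.
Deleting it leaves `v = d * (n - 1) / 2` points in each half of the cycle; reading the first half
upwards as `1, …, v` and its mirror image as `v + 1, …, 2 * v` turns the reflection into the shift
by `v`, and the remaining blocks into a 2-symmetric diagram `Q`. In each half the deleted block had
`d / 2 - 1` points, no two of them adjacent to each other or to a fixed point, so they sat between
`t` and `t + 1` for the `t` in a set `T ⊆ {1, …, v - 1}` of size `d / 2 - 1`. Conversely `Q` and `T`
recover `P`, which is loopless exactly if `T` contains all loops of `Q` in its first sector. If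
there are `k` of these, `T` can be chosen in `C(v - 1 - k, d / 2 - 1 - k)` ways.
-/

open Finset

section UniformPartition

variable {α β : Type*} [DecidableEq β]
  {s B : Finset α} {d : ℕ} {P : Finset (Finset α)} {f : α → β}

/-- `P` partitions the finite set `s` into blocks of size `d`. Both `IsLinearDiagram` and
`IsChordDiagram` are instances. -/
def IsUniformPartition (s : Finset α) (d : ℕ) (P : Finset (Finset α)) : Prop :=
  (∀ b ∈ P, #b = d) ∧ P ⊆ s.powerset ∧ ∀ x ∈ s, ∃! b, b ∈ P ∧ x ∈ b

lemma image_mem_image_image_iff (hf : Set.InjOn f s) (hP : P ⊆ s.powerset) {b : Finset α}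
    (hb : b ⊆ s) : b.image f ∈ P.image (image f) ↔ b ∈ P := by
  refine ⟨fun h ↦ ?_, mem_image_of_mem _⟩
  obtain ⟨c, hc, hcb⟩ := mem_image.1 h
  rwa [← image_injOn_powerset_of_injOn hf (hP hc) (mem_powerset.2 hb) hcb]

lemma isUniformPartition_image_iff (hf : Set.InjOn f s) (hP : P ⊆ s.powerset) :
    IsUniformPartition (s.image f) d (P.image (image f)) ↔ IsUniformPartition s d P := by
  have hsub {b : Finset α} (hb : b ∈ P) : b ⊆ s := mem_powerset.1 (hP hb)
  have hmem {b : Finset α} (hb : b ∈ P) {x : α} (hx : x ∈ s) : f x ∈ b.image f ↔ x ∈ b := by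
    exact_mod_cast hf.mem_image_iff (coe_subset.2 (hsub hb)) (mem_coe.2 hx)
  have hcard : (∀ b ∈ P.image (image f), #b = d) ↔ ∀ b ∈ P, #b = d := by
    rw [forall_mem_image]
    exact forall₂_congr fun b hb ↦ by rw [card_image_of_injOn (hf.mono (hsub hb))]
  have hpow : P.image (image f) ⊆ (s.image f).powerset :=
    powerset_image (f := f) ▸ image_subset_image hP
  have huniq : (∀ y ∈ s.image f, ∃! c, c ∈ P.image (image f) ∧ y ∈ c) ↔
      ∀ x ∈ s, ∃! b, b ∈ P ∧ x ∈ b := by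
    rw [forall_mem_image]
    refine forall₂_congr fun x hx ↦ ⟨?_, ?_⟩
    · rintro ⟨c, ⟨hc, hxc⟩, hc_unique⟩
      obtain ⟨b, hb, rfl⟩ := mem_image.1 hc
      refine ⟨b, ⟨hb, (hmem hb hx).1 hxc⟩, fun b' ⟨hb', hxb'⟩ ↦ ?_⟩
      exact image_injOn_powerset_of_injOn hf (hP hb') (hP hb)
        (hc_unique _ ⟨mem_image_of_mem _ hb', mem_image_of_mem f hxb'⟩)
    · rintro ⟨b, ⟨hb, hxb⟩, hb_unique⟩
      refine ⟨b.image f, ⟨mem_image_of_mem _ hb, mem_image_of_mem f hxb⟩, ?_⟩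
      rintro c ⟨hc, hxc⟩
      obtain ⟨b', hb', rfl⟩ := mem_image.1 hc
      rw [hb_unique b' ⟨hb', (hmem hb' hx).1 hxc⟩]
  simp only [IsUniformPartition, hcard, hpow, hP, huniq]

lemma isUniformPartition_insert_iff [DecidableEq α] (hB : #B = d) (hBs : Disjoint B s)
    (hP : P ⊆ s.powerset) :
    IsUniformPartition (B ∪ s) d (insert B P) ↔ IsUniformPartition s d P := by
  have hcard : (∀ b ∈ insert B P, #b = d) ↔ ∀ b ∈ P, #b = d := by
    simp only [forall_mem_insert, hB, true_and]
  have hpow : insert B P ⊆ (B ∪ s).powerset :=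
    insert_subset (mem_powerset.2 subset_union_left)
      (hP.trans (powerset_mono.2 subset_union_right))
  have huniq_B : ∀ x ∈ B, ∃! b, b ∈ insert B P ∧ x ∈ b := by
    refine fun x hx ↦ ⟨B, ⟨mem_insert_self B P, hx⟩, fun b ⟨hb, hxb⟩ ↦ ?_⟩
    refine (mem_insert.1 hb).resolve_right fun hbP ↦ ?_
    exact disjoint_left.1 hBs hx (mem_powerset.1 (hP hbP) hxb)
  have hmem {x : α} (hx : x ∈ s) (b : Finset α) : b ∈ insert B P ∧ x ∈ b ↔ b ∈ P ∧ x ∈ b := by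
    rw [mem_insert]
    refine and_congr_left fun hxb ↦ or_iff_right ?_
    rintro rfl
    exact disjoint_left.1 hBs hxb hx
  have huniq : (∀ x ∈ B ∪ s, ∃! b, b ∈ insert B P ∧ x ∈ b) ↔ ∀ x ∈ s, ∃! b, b ∈ P ∧ x ∈ b := by
    rw [forall_mem_union, and_iff_right huniq_B]
    exact forall₂_congr fun x hx ↦ existsUnique_congr (hmem hx)
  simp only [IsUniformPartition, hcard, hpow, hP, huniq]

lemma forall_image_mem_image_iff [DecidableEq α] {σ : α → α} {τ : β → β} (hf : Set.InjOn f s)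
    (hP : P ⊆ s.powerset) (hσ : Set.MapsTo σ s s) (hfσ : ∀ x ∈ s, f (σ x) = τ (f x)) :
    (∀ c ∈ P.image (image f), c.image τ ∈ P.image (image f)) ↔ ∀ b ∈ P, b.image σ ∈ P := by
  rw [forall_mem_image]
  refine forall₂_congr fun b hb ↦ ?_
  have hbs : b ⊆ s := mem_powerset.1 (hP hb)
  have himage : (b.image f).image τ = (b.image σ).image f := by
    simp only [image_image]
    exact image_congr fun x hx ↦ (hfσ x (hbs hx)).symm
  rw [himage, image_mem_image_image_iff hf hP (hσ.mono_left hbs).finsetImage_subset]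

lemma forall_image_mem_insert_iff [DecidableEq α] {τ : α → α} (hτ : τ.Injective)
    (hτB : B.image τ = B) (hB : B ∉ P) :
    (∀ b ∈ insert B P, b.image τ ∈ insert B P) ↔ ∀ b ∈ P, b.image τ ∈ P := by
  rw [forall_mem_insert, hτB, and_iff_right (mem_insert_self B P)]
  refine forall₂_congr fun b hb ↦ ?_
  rw [mem_insert, or_iff_right]
  intro h
  exact hB (image_injective hτ (h.trans hτB.symm) ▸ hb)

end UniformPartition

section Spread

variable {T : Finset ℕ} {j t : ℕ}

/-- The increasing enumeration of `ℕ` with one value skipped right after the value at each `t ∈ T`.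
The skipped values form `gaps T`. -/
def spread (T : Finset ℕ) (j : ℕ) : ℕ := j + #{t ∈ T | t < j}

/-- The values skipped by `spread T`. -/
def gaps (T : Finset ℕ) : Finset ℕ := T.image (spread T · + 1)

lemma spread_zero (T : Finset ℕ) : spread T 0 = 0 := by simp [spread]

lemma spread_eq_add_card (h : ∀ t ∈ T, t < j) : spread T j = j + #T := by
  rw [spread, filter_true_of_mem h]

lemma spread_succ_of_mem (h : t ∈ T) : spread T (t + 1) = spread T t + 2 := by
  have : {x ∈ T | x < t + 1} = insert t {x ∈ T | x < t} := by grind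
  rw [spread, this, card_insert_of_notMem (by simp), spread]
  omega

lemma spread_succ_of_notMem (h : j ∉ T) : spread T (j + 1) = spread T j + 1 := by
  have : {x ∈ T | x < j + 1} = {x ∈ T | x < j} := by grind
  rw [spread, this, spread]
  omega

lemma spread_strictMono (T : Finset ℕ) : StrictMono (spread T) := by
  refine strictMono_nat_of_lt_succ fun j ↦ ?_
  by_cases h : j ∈ T
  · simp [spread_succ_of_mem h]
  · simp [spread_succ_of_notMem h]

lemma spread_insert_of_le (h : j ≤ t) : spread (insert t T) j = spread T j := by
  rw [spread, filter_insert, if_neg h.not_gt, spread]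

lemma card_gaps (T : Finset ℕ) : #(gaps T) = #T :=
  card_image_of_injective _ ((add_left_injective 1).comp (spread_strictMono T).injective)

lemma spread_ne_of_mem_gaps {a : ℕ} (ha : a ∈ gaps T) (j : ℕ) : spread T j ≠ a := by
  obtain ⟨t, ht, rfl⟩ := mem_image.1 ha
  rcases le_or_gt j t with h | h
  · exact (Nat.lt_succ_of_le ((spread_strictMono T).monotone h)).ne
  · have := (spread_strictMono T).monotone (Nat.succ_le_of_lt h)
    rw [Nat.succ_eq_add_one, spread_succ_of_mem ht] at this
    omega

lemma notMem_gaps_iff {a : ℕ} : a ∉ gaps T ↔ ∃ j, spread T j = a := by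
  refine ⟨fun ha ↦ ?_, fun ⟨j, hj⟩ ha ↦ spread_ne_of_mem_gaps ha j hj⟩
  suffices h : a ∈ gaps T ∨ ∃ j, spread T j = a from h.resolve_left ha
  clear ha
  induction a with
  | zero => exact .inr ⟨0, spread_zero T⟩
  | succ a ih =>
    rcases ih with ha | ⟨j, rfl⟩
    · obtain ⟨t, ht, rfl⟩ := mem_image.1 ha
      exact .inr ⟨t + 1, spread_succ_of_mem ht⟩
    · by_cases hj : j ∈ T
      · exact .inl (mem_image_of_mem _ hj)
      · exact .inr ⟨j + 1, spread_succ_of_notMem hj⟩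

lemma spread_succ_mem_gaps_iff : spread T j + 1 ∈ gaps T ↔ j ∈ T := by
  refine ⟨fun h ↦ ?_, mem_image_of_mem _⟩
  by_contra hj
  exact spread_ne_of_mem_gaps h (j + 1) (spread_succ_of_notMem hj)

lemma gaps_injective : Function.Injective gaps := by
  intro T T' h
  have hspread : spread T = spread T' := by
    refine ((spread_strictMono T).range_inj (spread_strictMono T')).1 (Set.ext fun a ↦ ?_)
    rw [Set.mem_range, Set.mem_range, ← notMem_gaps_iff, ← notMem_gaps_iff, h]
  ext t
  rw [← spread_succ_mem_gaps_iff, h, hspread, spread_succ_mem_gaps_iff]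

/-- A finite set of positive integers without consecutive elements is a set of gaps: its largest
element `a` is inserted right after the index whose value is `a - 1`. -/
lemma exists_gaps_eq {S : Finset ℕ} (hzero : 0 ∉ S) (hsucc : ∀ a ∈ S, a + 1 ∉ S) :
    ∃ T, gaps T = S := by
  induction S using Finset.induction_on_max with
  | empty => exact ⟨∅, rfl⟩
  | insert a S hmax ih =>
    obtain ⟨T, rfl⟩ := ih (fun h ↦ hzero (mem_insert_of_mem h))
      fun b hb hb' ↦ hsucc b (mem_insert_of_mem hb) (mem_insert_of_mem hb')
    have ha_pos : a ≠ 0 := fun h ↦ hzero (h ▸ mem_insert_self a _)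
    have hpred : a - 1 ∉ gaps T := fun h ↦ hsucc (a - 1) (mem_insert_of_mem h) <| by
      rw [Nat.sub_one_add_one ha_pos]
      exact mem_insert_self a _
    obtain ⟨t, ht⟩ := notMem_gaps_iff.1 hpred
    have ha : spread T t + 1 = a := by omega
    have hlt : ∀ t' ∈ T, t' < t := by
      intro t' ht'
      have h_gap := spread_succ_mem_gaps_iff.2 ht'
      have : spread T t' < spread T t := by
        have := hmax _ h_gap
        omega
      exact (spread_strictMono T).lt_iff_lt.1 this
    refine ⟨insert t T, ?_⟩
    rw [gaps, image_insert, spread_insert_of_le le_rfl, ha]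
    refine congrArg _ (image_congr fun t' ht' ↦ ?_)
    rw [spread_insert_of_le (hlt t' ht').le]

end Spread

section MSymLinear

variable {d m v M : ℕ} {Q : Finset (Finset ℕ)}

lemma mapsTo_shiftMod (hv : v ≤ M) :
    Set.MapsTo (shiftMod M v) (Icc 1 M : Finset ℕ) (Icc 1 M : Finset ℕ) := by
  intro i hi
  simp only [coe_Icc, Set.mem_Icc, shiftMod] at hi ⊢
  split_ifs <;> omega

lemma injOn_shiftMod : Set.InjOn (shiftMod M v) (Icc 1 M : Finset ℕ) := by
  intro i hi j hj h
  simp only [coe_Icc, Set.mem_Icc, shiftMod] at hi hj h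
  split_ifs at h <;> omega

lemma isMSymLinear_iff : IsMSymLinear d m v Q ↔
    IsUniformPartition (Icc 1 (m * v)) d Q ∧ ∀ b ∈ Q, b.image (shiftMod (m * v) v) ∈ Q := by
  simp only [IsMSymLinear, IsLinearDiagram, IsUniformPartition, subset_iff, mem_powerset]

lemma IsMSymLinear.subset_powerset (hQ : IsMSymLinear d m v Q) :
    Q ⊆ (Icc 1 (m * v)).powerset :=
  (isMSymLinear_iff.1 hQ).1.2.1

/-- The shift permutes the finitely many blocks, since it is injective on them. -/
lemma IsMSymLinear.exists_image_shiftMod_eq (hQ : IsMSymLinear d m v Q)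
    {b : Finset ℕ} (hb : b ∈ Q) : ∃ c ∈ Q, c.image (shiftMod (m * v) v) = b :=
  surjOn_of_injOn_of_card_le (image (shiftMod (m * v) v)) hQ.2
    ((image_injOn_powerset_of_injOn injOn_shiftMod).mono
      (coe_subset.2 hQ.subset_powerset)) le_rfl hb

lemma sectorLoops_succ (hQ : IsMSymLinear d m v Q) {s : ℕ} (hs : s + 1 < m) :
    sectorLoops v Q (s + 1) = sectorLoops v Q s := by
  have hsv : (s + 1) * v = s * v + v := Nat.succ_mul s v
  have hssv : (s + 1 + 1) * v = s * v + v + v := by rw [Nat.succ_mul, hsv]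
  have hmv : s * v + v + v ≤ m * v := hssv ▸ Nat.mul_le_mul_right v hs
  rw [sectorLoops, sectorLoops]
  refine Eq.trans ?_ (Set.ncard_image_of_injective _ (add_left_injective v))
  congr 1
  ext i
  constructor
  · rintro ⟨hi, hi', b, hb, hib, hib'⟩
    obtain ⟨c, hc, rfl⟩ := hQ.exists_image_shiftMod_eq hb
    have hpred {k : ℕ} (hk : v < k) (hkb : k ∈ c.image (shiftMod (m * v) v)) : k - v ∈ c := by
      obtain ⟨x, hx, hxk⟩ := mem_image.1 hkb
      have hx_le := (mem_Icc.1 (hQ.1.2.1 c hc x hx)).2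
      have : x = k - v := by
        unfold shiftMod at hxk
        split_ifs at hxk <;> omega
      exact this ▸ hx
    refine ⟨i - v, ⟨by omega, by omega, c, hc, hpred (by omega) hib, ?_⟩, by simp only; omega⟩
    have : i - v + 1 = i + 1 - v := by omega
    exact this ▸ hpred (by omega) hib'
  · rintro ⟨j, ⟨hj, hj', b, hb, hjb, hjb'⟩, rfl⟩
    have hshift {k : ℕ} (hk : k + v ≤ m * v) (hkb : k ∈ b) :
        k + v ∈ b.image (shiftMod (m * v) v) :=
      mem_image.2 ⟨k, hkb, if_pos hk⟩
    refine ⟨by simp only; omega, by simp only; omega, _, hQ.2 b hb, hshift (by omega) hjb, ?_⟩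
    have : j + v + 1 = j + 1 + v := by omega
    exact this ▸ hshift (by omega) hjb'

lemma sectorLoops_eq_sectorLoops_zero (hQ : IsMSymLinear d m v Q) {s : ℕ} (hs : s < m) :
    sectorLoops v Q s = sectorLoops v Q 0 := by
  induction s with
  | zero => rfl
  | succ s ih => rw [sectorLoops_succ hQ hs, ih (by omega)]

/-- The loops of `Q` lying in its first sector `{1, …, v}`. -/
def firstSectorLoops (v : ℕ) (Q : Finset (Finset ℕ)) : Finset ℕ :=
  {i ∈ Icc 1 (v - 1) | ∃ b ∈ Q, i ∈ b ∧ i + 1 ∈ b}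

lemma sectorLoops_zero (v : ℕ) (Q : Finset (Finset ℕ)) :
    sectorLoops v Q 0 = #(firstSectorLoops v Q) := by
  rw [sectorLoops, ← Set.ncard_coe_finset]
  congr 1
  ext i
  simp only [firstSectorLoops, Set.mem_ofPred_eq, coe_filter, mem_Icc, ← and_assoc]
  exact and_congr_left fun _ ↦ by omega

lemma numAtil_eq_card_filter (hm : 1 ≤ m) {D : Finset (Finset (Finset ℕ))}
    (hD : ∀ Q, Q ∈ D ↔ IsMSymLinear d m v Q) (k : ℕ) :
    numAtil d m v k = #{Q ∈ D | #(firstSectorLoops v Q) = k} := by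
  rw [numAtil, ← Set.ncard_coe_finset]
  congr 1
  ext Q
  simp only [Set.mem_ofPred_eq, coe_filter, hD]
  refine and_congr_right fun hQ ↦ ?_
  rw [← sectorLoops_zero]
  exact ⟨fun h ↦ h 0 hm, fun h s hs ↦ (sectorLoops_eq_sectorLoops_zero hQ hs).trans h⟩

end MSymLinear

section ReflectionInvariant

variable {N : ℕ}

lemma natAbs_valMinAbs_natCast {a : ℕ} (ha : a ≤ N / 2) :
    (a : ZMod N).valMinAbs.natAbs = a := by
  rw [ZMod.valMinAbs_natCast_of_le_half ha, Int.natAbs_natCast]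

variable [NeZero N] {A : Finset ℕ} {x : ZMod N}

/-- The residues modulo `N` whose distance to `0` on the cycle belongs to `A`. These are
exactly the subsets of `ZMod N` invariant under negation. -/
def symmSet (N : ℕ) [NeZero N] (A : Finset ℕ) : Finset (ZMod N) :=
  {x | x.valMinAbs.natAbs ∈ A}

lemma mem_symmSet : x ∈ symmSet N A ↔ x.valMinAbs.natAbs ∈ A := by simp [symmSet]

lemma neg_mem_symmSet : -x ∈ symmSet N A ↔ x ∈ symmSet N A := by
  simp only [mem_symmSet, ZMod.natAbs_valMinAbs_neg]

lemma image_neg_symmSet : (symmSet N A).image (fun x ↦ -x) = symmSet N A := by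
  ext x
  rw [mem_image]
  exact ⟨fun ⟨y, hy, hyx⟩ ↦ hyx ▸ neg_mem_symmSet.2 hy,
    fun hx ↦ ⟨-x, neg_mem_symmSet.2 hx, neg_neg x⟩⟩

lemma natCast_mem_symmSet {a : ℕ} (ha : a ≤ N / 2) : (a : ZMod N) ∈ symmSet N A ↔ a ∈ A := by
  rw [mem_symmSet, natAbs_valMinAbs_natCast ha]

lemma eq_natAbs_valMinAbs_or_eq_neg (x : ZMod N) :
    x = (x.valMinAbs.natAbs : ZMod N) ∨ x = -(x.valMinAbs.natAbs : ZMod N) :=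
  ZMod.natAbs_valMinAbs_eq_natAbs_valMinAbs.1
    (natAbs_valMinAbs_natCast x.natAbs_valMinAbs_le).symm

lemma exists_eq_symmSet {b : Finset (ZMod N)} (hb : b.image (fun x ↦ -x) = b) :
    ∃ A ⊆ Iic (N / 2), b = symmSet N A := by
  have hneg {x : ZMod N} (hx : x ∈ b) : -x ∈ b := hb ▸ mem_image_of_mem _ hx
  refine ⟨b.image fun x ↦ x.valMinAbs.natAbs, ?_, ?_⟩
  · exact image_subset_iff.2 fun x _ ↦ mem_Iic.2 x.natAbs_valMinAbs_le
  · ext x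
    rw [mem_symmSet, mem_image]
    refine ⟨fun hx ↦ ⟨x, hx, rfl⟩, ?_⟩
    rintro ⟨y, hy, hyx⟩
    obtain rfl | rfl := ZMod.natAbs_valMinAbs_eq_natAbs_valMinAbs.1 hyx
    · exact hy
    · exact neg_neg x ▸ hneg hy

lemma card_filter_natAbs_valMinAbs_eq {a : ℕ} (ha : a ≤ N / 2) :
    #{x : ZMod N | x.valMinAbs.natAbs = a} = if a = 0 ∨ 2 * a = N then 1 else 2 := by
  have hfiber : ({x : ZMod N | x.valMinAbs.natAbs = a} : Finset (ZMod N)) =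
      {(a : ZMod N), -(a : ZMod N)} := by
    ext x
    rw [mem_filter_univ, mem_insert, mem_singleton, ← ZMod.natAbs_valMinAbs_eq_natAbs_valMinAbs,
      natAbs_valMinAbs_natCast ha]
  have hN : 0 < N := NeZero.pos N
  have hval : (a : ZMod N).val = a := ZMod.val_natCast_of_lt (by omega)
  have hself : -(a : ZMod N) = a ↔ a = 0 ∨ 2 * a = N := by
    rw [ZMod.neg_eq_self_iff, hval, ← ZMod.val_eq_zero, hval]
  rw [hfiber]
  split_ifs with h
  · rw [hself.2 h, pair_eq_singleton, card_singleton]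
  · exact card_pair fun h' ↦ h (hself.1 h'.symm)

lemma card_symmSet (hA : A ⊆ Iic (N / 2)) :
    #(symmSet N A) = ∑ a ∈ A, if a = 0 ∨ 2 * a = N then 1 else 2 := by
  rw [card_eq_sum_card_fiberwise (f := fun x : ZMod N ↦ x.valMinAbs.natAbs) (t := A)
    fun x hx ↦ mem_symmSet.1 hx]
  refine sum_congr rfl fun a ha ↦ ?_
  rw [← card_filter_natAbs_valMinAbs_eq (mem_Iic.1 (hA ha))]
  refine congrArg card ?_
  ext x
  rw [mem_filter, mem_filter_univ, mem_symmSet]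
  exact and_iff_right_of_imp fun hx ↦ hx ▸ ha

end ReflectionInvariant

section EvenOrder

variable {w : ℕ} [NeZero w] {A : Finset ℕ}

lemma card_symmSet_of_subset_Ioo (hA : A ⊆ Ioo 0 w) : #(symmSet (2 * w) A) = 2 * #A := by
  have hA_half : A ⊆ Iic (2 * w / 2) := fun a ha ↦ by
    have := mem_Ioo.1 (hA ha)
    rw [mem_Iic]
    omega
  rw [card_symmSet hA_half, sum_const_nat (m := 2), mul_comm]
  intro a ha
  have := mem_Ioo.1 (hA ha)
  exact if_neg (by omega)

/-- The elements other than the fixed points `0` and `w` come in pairs `{x, -x}`, so the parity of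
`#b` forces `w ∈ b`. -/
lemma exists_eq_symmSet_insert {b : Finset (ZMod (2 * w))} (hb : b.image (fun x ↦ -x) = b)
    (hzero : 0 ∈ b) (heven : Even #b) :
    ∃ S ⊆ Ioo 0 w, b = symmSet (2 * w) (insert 0 (insert w S)) ∧ #b = 2 * (#S + 1) := by
  obtain ⟨A, hA, rfl⟩ := exists_eq_symmSet hb
  have hw : 0 < w := NeZero.pos w
  have hle {a : ℕ} (ha : a ∈ A) : a ≤ w := by simpa using hA ha
  have h0A : 0 ∈ A := by simpa [mem_symmSet] using hzero
  set S := (A.erase 0).erase w with hS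
  have hSA : S ⊆ Ioo 0 w := fun a ha ↦ by grind
  have hsum : ∑ a ∈ S, (if a = 0 ∨ 2 * a = 2 * w then 1 else 2) = 2 * #S := by
    rw [← card_symmSet_of_subset_Ioo hSA, card_symmSet]
    exact fun a ha ↦ hA (erase_subset _ _ (erase_subset _ _ ha))
  have hwA : w ∈ A := by
    by_contra hwA
    have hA_eq : A = insert 0 S := by grind
    rw [card_symmSet hA, hA_eq, sum_insert (by simp [hS]), hsum, if_pos (.inl rfl)] at heven
    grind
  have hA_eq : A = insert 0 (insert w S) := by grind
  refine ⟨S, hSA, by rw [← hA_eq], ?_⟩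
  rw [card_symmSet hA, hA_eq, sum_insert (by grind), sum_insert (by simp [hS]), hsum,
    if_pos (.inl rfl), if_pos (.inr rfl)]
  ring

lemma exists_lt_eq_natCast_or_eq_neg_succ (x : ZMod (2 * w)) :
    ∃ a < w, x = a ∨ x = -((a + 1 : ℕ) : ZMod (2 * w)) := by
  have hx := x.val_lt
  rcases lt_or_ge x.val w with h | h
  · exact ⟨x.val, h, .inl (ZMod.natCast_zmod_val x).symm⟩
  · refine ⟨2 * w - 1 - x.val, by omega, .inr (eq_neg_of_add_eq_zero_left ?_)⟩
    have hsum : x.val + (2 * w - 1 - x.val + 1) = 2 * w := by omega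
    rw [← ZMod.natCast_zmod_val x, ← Nat.cast_add, ZMod.val_natCast_of_lt hx, hsum,
      ZMod.natCast_self]

/-- The reflection exchanges the steps `x → x + 1` in the two halves of the cycle. -/
lemma chordLoopless_iff_of_neg_invariant {P : Finset (Finset (ZMod (2 * w)))}
    (hP : ∀ b ∈ P, b.image (fun x ↦ -x) ∈ P) :
    ChordLoopless (2 * w) P ↔
      ∀ b ∈ P, ∀ a < w, (a : ZMod (2 * w)) ∈ b → ((a + 1 : ℕ) : ZMod (2 * w)) ∉ b := by
  refine ⟨fun h b hb a _ ha ha' ↦ h a b hb ha (by exact_mod_cast ha'), fun h x b hb hx hx' ↦ ?_⟩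
  obtain ⟨a, ha, rfl | rfl⟩ := exists_lt_eq_natCast_or_eq_neg_succ x
  · exact h b hb a ha hx (by exact_mod_cast hx')
  · refine h _ (hP b hb) a ha (mem_image.2 ⟨_, hx', ?_⟩) (mem_image.2 ⟨_, hx, neg_neg _⟩)
    push_cast
    ring

end EvenOrder

section GapSet

variable {w v : ℕ} {T S : Finset ℕ}

/-- `T` is a subset of `{1, …, v - 1}` of the size for which `spread T` maps `{1, …, v}` onto the
integers strictly between `0` and `w` that are not gaps. -/
structure IsGapSet (w v : ℕ) (T : Finset ℕ) : Prop where
  subset : T ⊆ Icc 1 (v - 1)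
  card : v + #T + 1 = w

lemma isGapSet_iff_mem_powersetCard {g : ℕ} :
    IsGapSet (v + g + 1) v T ↔ T ∈ powersetCard g (Icc 1 (v - 1)) := by
  rw [mem_powersetCard]
  exact ⟨fun h ↦ ⟨h.subset, by have := h.card; omega⟩, fun h ↦ ⟨h.1, by rw [h.2]⟩⟩

lemma IsGapSet.pos_and_lt (hT : IsGapSet w v T) {t : ℕ} (ht : t ∈ T) : 0 < t ∧ t < v := by
  have := mem_Icc.1 (hT.subset ht)
  omega

lemma IsGapSet.spread_top_succ (hT : IsGapSet w v T) : spread T v + 1 = w := by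
  rw [spread_eq_add_card fun t ht ↦ (hT.pos_and_lt ht).2, hT.card]

lemma IsGapSet.spread_lt (hT : IsGapSet w v T) {j : ℕ} (hj : j ≤ v) : spread T j < w :=
  Nat.lt_of_le_of_lt ((spread_strictMono T).monotone hj) (Nat.lt_of_succ_le hT.spread_top_succ.le)

lemma IsGapSet.gaps_subset_Ioo (hT : IsGapSet w v T) : gaps T ⊆ Ioo 0 w := by
  refine image_subset_iff.2 fun t ht ↦ mem_Ioo.2 ⟨Nat.succ_pos _, ?_⟩
  rw [← hT.spread_top_succ, Nat.add_lt_add_iff_right]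
  exact spread_strictMono T (hT.pos_and_lt ht).2

lemma IsGapSet.mem_image_spread_iff (hT : IsGapSet w v T) {a : ℕ} (ha : a ≤ w) :
    a ∈ (Icc 1 v).image (spread T) ↔ a ∉ insert 0 (insert w (gaps T)) := by
  have hmono := spread_strictMono T
  simp only [mem_image, mem_Icc, mem_insert, not_or, notMem_gaps_iff]
  constructor
  · rintro ⟨j, ⟨hj_pos, hj⟩, rfl⟩
    exact ⟨Nat.ne_of_gt (hj_pos.trans hmono.le_apply), (hT.spread_lt hj).ne, j, rfl⟩
  · rintro ⟨h0, hw, j, rfl⟩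
    refine ⟨j, ⟨Nat.one_le_iff_ne_zero.2 fun hj ↦ h0 (hj ▸ spread_zero T), ?_⟩, rfl⟩
    refine hmono.le_iff_le.1 (Nat.le_of_lt_succ ?_)
    rw [Nat.succ_eq_add_one, hT.spread_top_succ]
    exact lt_of_le_of_ne ha hw

lemma IsGapSet.image_spread_subset_Ioo (hT : IsGapSet w v T) :
    (Icc 1 v).image (spread T) ⊆ Ioo 0 w := by
  refine image_subset_iff.2 fun j hj ↦ mem_Ioo.2 ?_
  obtain ⟨hj_pos, hj⟩ := mem_Icc.1 hj
  exact ⟨hj_pos.trans (spread_strictMono T).le_apply, hT.spread_lt hj⟩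

lemma IsGapSet.succ_notMem_insert_gaps (hT : IsGapSet w v T) (hv : 1 ≤ v) {a : ℕ} (ha : a < w)
    (hmem : a ∈ insert 0 (insert w (gaps T))) : a + 1 ∉ insert 0 (insert w (gaps T)) := by
  rw [← hT.mem_image_spread_iff ha, mem_image]
  rw [mem_insert, mem_insert, or_iff_right ha.ne] at hmem
  obtain rfl | hgap := hmem
  · have h0 : 0 ∉ T := fun h ↦ (hT.pos_and_lt h).1.ne rfl
    exact ⟨1, mem_Icc.2 ⟨le_rfl, hv⟩, by simpa [spread_zero] using spread_succ_of_notMem h0⟩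
  · obtain ⟨t, ht, rfl⟩ := mem_image.1 hgap
    exact ⟨t + 1, mem_Icc.2 ⟨Nat.succ_pos t, (hT.pos_and_lt ht).2⟩, spread_succ_of_mem ht⟩

lemma exists_isGapSet_gaps_eq (hS : S ⊆ Ioo 0 w) (hcard : v + #S + 1 = w)
    (hsucc : ∀ a < w, a ∈ insert 0 (insert w S) → a + 1 ∉ insert 0 (insert w S)) :
    ∃ T, IsGapSet w v T ∧ gaps T = S := by
  have hS_succ {a : ℕ} (ha : a ∈ S) : a + 1 ≠ w ∧ a + 1 ∉ S := by
    have := hsucc a (mem_Ioo.1 (hS ha)).2 (mem_insert_of_mem (mem_insert_of_mem ha))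
    simp only [mem_insert, not_or] at this
    exact this.2
  obtain ⟨T, rfl⟩ := exists_gaps_eq (fun h ↦ (mem_Ioo.1 (hS h)).1.ne rfl) fun a ha ↦ (hS_succ ha).2
  rw [card_gaps] at hcard
  refine ⟨T, ⟨fun t ht ↦ mem_Icc.2 ⟨Nat.one_le_iff_ne_zero.2 ?_, ?_⟩, hcard⟩, rfl⟩
  · rintro rfl
    have h1 : 0 + 1 ∈ gaps T := spread_zero T ▸ spread_succ_mem_gaps_iff.2 ht
    exact hsucc 0 (by omega) (mem_insert_self 0 _) (mem_insert_of_mem (mem_insert_of_mem h1))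
  · set M := T.max' ⟨t, ht⟩
    have hM : M ∈ T := T.max'_mem _
    have hgap := spread_succ_mem_gaps_iff.2 hM
    have hlast : spread T (M + 1) = M + 1 + #T :=
      spread_eq_add_card fun x hx ↦ Nat.lt_succ_of_le (T.le_max' x hx)
    have hlt := (mem_Ioo.1 (hS hgap)).2
    have hne := (hS_succ hgap).1
    have htM : t ≤ M := T.le_max' t ht
    rw [spread_succ_of_mem hM] at hlast
    omega

end GapSet

section FixedBlock

variable {w v : ℕ} [NeZero w] {T : Finset ℕ}

/-- The reflection-invariant subset of `ZMod (2 * w)` that contains the two fixed points `0` and `w`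
of the reflection and meets the half `{1, …, w - 1}` in `gaps T`. -/
def fixedBlock (w : ℕ) [NeZero w] (T : Finset ℕ) : Finset (ZMod (2 * w)) :=
  symmSet (2 * w) (insert 0 (insert w (gaps T)))

lemma zero_mem_fixedBlock (w : ℕ) [NeZero w] (T : Finset ℕ) : 0 ∈ fixedBlock w T := by
  simp [fixedBlock, mem_symmSet]

lemma image_neg_fixedBlock : (fixedBlock w T).image (fun x ↦ -x) = fixedBlock w T :=
  image_neg_symmSet

lemma natCast_mem_fixedBlock {a : ℕ} (ha : a ≤ w) :
    (a : ZMod (2 * w)) ∈ fixedBlock w T ↔ a ∈ insert 0 (insert w (gaps T)) :=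
  natCast_mem_symmSet (by omega)

lemma IsGapSet.succ_notMem_fixedBlock (hT : IsGapSet w v T) (hv : 1 ≤ v) {a : ℕ} (ha : a < w)
    (hmem : (a : ZMod (2 * w)) ∈ fixedBlock w T) :
    ((a + 1 : ℕ) : ZMod (2 * w)) ∉ fixedBlock w T := by
  rw [natCast_mem_fixedBlock ha.le] at hmem
  rw [natCast_mem_fixedBlock ha]
  exact hT.succ_notMem_insert_gaps hv ha hmem

lemma IsGapSet.eq_of_fixedBlock_eq {T' : Finset ℕ} (hT : IsGapSet w v T) (hT' : IsGapSet w v T')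
    (h : fixedBlock w T = fixedBlock w T') : T = T' := by
  refine gaps_injective ?_
  ext a
  by_cases ha : a ∈ Ioo 0 w
  · obtain ⟨ha_pos, ha_lt⟩ := mem_Ioo.1 ha
    have := natCast_mem_fixedBlock (T := T) ha_lt.le
    rw [h, natCast_mem_fixedBlock ha_lt.le] at this
    simpa [ha_pos.ne', ha_lt.ne] using this.symm
  · exact iff_of_false (fun h ↦ ha (hT.gaps_subset_Ioo h)) fun h ↦ ha (hT'.gaps_subset_Ioo h)

lemma exists_isGapSet_fixedBlock_eq {b : Finset (ZMod (2 * w))}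
    (hb : b.image (fun x ↦ -x) = b) (hzero : 0 ∈ b) (hcard : #b + 2 * v = 2 * w)
    (hloopless : ∀ x ∈ b, x + 1 ∉ b) : ∃ T, IsGapSet w v T ∧ fixedBlock w T = b := by
  obtain ⟨S, hS, rfl, hS_card⟩ := exists_eq_symmSet_insert hb hzero ⟨w - v, by omega⟩
  have hsucc : ∀ a < w, a ∈ insert 0 (insert w S) → a + 1 ∉ insert 0 (insert w S) := by
    intro a ha hmem
    rw [← natCast_mem_symmSet (N := 2 * w) (by omega)] at hmem ⊢
    exact_mod_cast hloopless _ hmem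
  obtain ⟨T, hT, rfl⟩ := exists_isGapSet_gaps_eq (v := v) hS (by omega) hsucc
  exact ⟨T, hT, rfl⟩

end FixedBlock

section Place

variable {w v : ℕ} {T : Finset ℕ} {j : ℕ}

/-- Places the points `1, …, 2 * v` on the cycle `ZMod (2 * w)`, off `fixedBlock w T`: the points
`1, …, v` go to the half `{1, …, w - 1}`, and `v + j` goes to the mirror image of `j`. -/
def place (w v : ℕ) (T : Finset ℕ) (j : ℕ) : ZMod (2 * w) :=
  if j ≤ v then spread T j else -spread T (j - v)

lemma place_of_le (hj : j ≤ v) : place w v T j = spread T j := if_pos hj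

lemma place_add (hj : 1 ≤ j) : place w v T (j + v) = -spread T j := by
  rw [place, if_neg (by omega), Nat.add_sub_cancel]

lemma place_shiftMod (hj : j ∈ Icc 1 (2 * v)) :
    place w v T (shiftMod (2 * v) v j) = -place w v T j := by
  obtain ⟨hj_pos, hj_le⟩ := mem_Icc.1 hj
  rcases le_or_gt j v with h | h
  · rw [shiftMod, if_pos (by omega), place_add hj_pos, place_of_le h]
  · obtain ⟨i, rfl⟩ := Nat.exists_eq_add_of_le' h.le
    rw [shiftMod, if_neg (by omega), place_add (by omega), neg_neg,
      show i + v + v - 2 * v = i by omega, place_of_le (by omega)]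

variable [NeZero w]

lemma IsGapSet.image_place (hT : IsGapSet w v T) :
    (Icc 1 (2 * v)).image (place w v T) = symmSet (2 * w) ((Icc 1 v).image (spread T)) := by
  ext x
  rw [mem_image]
  constructor
  · have hmem {j : ℕ} (hj : 1 ≤ j) (hjv : j ≤ v) :
        (spread T j : ZMod (2 * w)) ∈ symmSet (2 * w) ((Icc 1 v).image (spread T)) := by
      rw [natCast_mem_symmSet (by have := hT.spread_lt hjv; omega)]
      exact mem_image_of_mem _ (mem_Icc.2 ⟨hj, hjv⟩)
    rintro ⟨j, hj, rfl⟩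
    obtain ⟨hj_pos, hj_le⟩ := mem_Icc.1 hj
    rw [place]
    split_ifs with h
    · exact hmem hj_pos h
    · exact neg_mem_symmSet.2 (hmem (by omega) (by omega))
  · intro hx
    obtain ⟨j, hj, hjx⟩ := mem_image.1 (mem_symmSet.1 hx)
    obtain ⟨hj_pos, hj_le⟩ := mem_Icc.1 hj
    obtain h | h := eq_natAbs_valMinAbs_or_eq_neg x
    · exact ⟨j, mem_Icc.2 ⟨hj_pos, by omega⟩, by rw [place_of_le hj_le, hjx, ← h]⟩
    · exact ⟨j + v, mem_Icc.2 ⟨by omega, by omega⟩, by rw [place_add hj_pos, hjx, ← h]⟩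

lemma IsGapSet.compl_fixedBlock (hT : IsGapSet w v T) :
    (fixedBlock w T)ᶜ = (Icc 1 (2 * v)).image (place w v T) := by
  ext x
  have hx : x.valMinAbs.natAbs ≤ w := x.natAbs_valMinAbs_le.trans (by omega)
  rw [hT.image_place, mem_compl, fixedBlock, mem_symmSet, mem_symmSet, hT.mem_image_spread_iff hx]

lemma IsGapSet.card_image_place (hT : IsGapSet w v T) :
    #((Icc 1 (2 * v)).image (place w v T)) = 2 * v := by
  rw [hT.image_place, card_symmSet_of_subset_Ioo hT.image_spread_subset_Ioo,
    card_image_of_injective _ (spread_strictMono T).injective, Nat.card_Icc, Nat.add_sub_cancel]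

lemma IsGapSet.injOn_place (hT : IsGapSet w v T) :
    Set.InjOn (place w v T) (Icc 1 (2 * v) : Finset ℕ) := by
  rw [← card_image_iff, hT.card_image_place, Nat.card_Icc, Nat.add_sub_cancel]

lemma IsGapSet.card_fixedBlock (hT : IsGapSet w v T) : #(fixedBlock w T) + 2 * v = 2 * w := by
  rw [← hT.card_image_place, ← hT.compl_fixedBlock, card_add_card_compl, ZMod.card]

lemma IsGapSet.spread_mem_image_place_iff (hT : IsGapSet w v T) {c : Finset ℕ}
    (hc : c ⊆ Icc 1 (2 * v)) (hj : j ∈ Icc 1 v) :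
    (spread T j : ZMod (2 * w)) ∈ c.image (place w v T) ↔ j ∈ c := by
  obtain ⟨hj_pos, hj_le⟩ := mem_Icc.1 hj
  rw [← place_of_le hj_le]
  exact_mod_cast hT.injOn_place.mem_image_iff (coe_subset.2 hc)
    (mem_coe.2 (mem_Icc.2 ⟨hj_pos, by omega⟩))

lemma IsGapSet.exists_spread_eq_of_mem_image_place (hT : IsGapSet w v T) {c : Finset ℕ}
    (hc : c ⊆ Icc 1 (2 * v)) {a : ℕ} (ha : a ≤ w)
    (hmem : (a : ZMod (2 * w)) ∈ c.image (place w v T)) : ∃ j ∈ Icc 1 v, spread T j = a := by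
  rw [← mem_image, hT.mem_image_spread_iff ha, ← natCast_mem_fixedBlock ha, ← mem_compl,
    hT.compl_fixedBlock]
  exact image_subset_image hc hmem

end Place

section Assemble

variable {w v d : ℕ} [NeZero w] {T : Finset ℕ} {Q : Finset (Finset ℕ)}
  {P : Finset (Finset (ZMod (2 * w)))}

/-- The loopless chord diagrams on `ZMod (2 * w)` with blocks of size `d` that are invariant under
`x ↦ -x`. -/
def reflectionDiagrams (w d : ℕ) : Set (Finset (Finset (ZMod (2 * w)))) :=
  {P | IsChordDiagram (2 * w) d P ∧ ChordLoopless (2 * w) P ∧ ∀ b ∈ P, b.image (fun x ↦ -x) ∈ P}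

/-- The diagram on `ZMod (2 * w)` made of `fixedBlock w T` and of the diagram `Q` on
`{1, …, 2 * v}` placed on the remaining points. -/
def assemble (w v : ℕ) [NeZero w] (Q : Finset (Finset ℕ)) (T : Finset ℕ) :
    Finset (Finset (ZMod (2 * w))) :=
  insert (fixedBlock w T) (Q.image (image (place w v T)))

lemma isChordDiagram_iff {N : ℕ} [NeZero N] {P : Finset (Finset (ZMod N))} :
    IsChordDiagram N d P ↔ IsUniformPartition univ d P := by
  simp [IsChordDiagram, IsUniformPartition]

lemma IsGapSet.disjoint_fixedBlock (hT : IsGapSet w v T) :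
    Disjoint (fixedBlock w T) ((Icc 1 (2 * v)).image (place w v T)) := by
  rw [← hT.compl_fixedBlock]
  exact disjoint_compl_right

lemma IsGapSet.image_place_subset_powerset (hT : IsGapSet w v T)
    (hQ : Q ⊆ (Icc 1 (2 * v)).powerset) :
    Q.image (image (place w v T)) ⊆ (fixedBlock w T)ᶜ.powerset := by
  rw [hT.compl_fixedBlock, powerset_image]
  exact image_subset_image hQ

lemma IsGapSet.zero_notMem_of_mem_image_place (hT : IsGapSet w v T)
    (hQ : Q ⊆ (Icc 1 (2 * v)).powerset) {c : Finset (ZMod (2 * w))}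
    (hc : c ∈ Q.image (image (place w v T))) : 0 ∉ c := fun h ↦
  mem_compl.1 (mem_powerset.1 (hT.image_place_subset_powerset hQ hc) h) (zero_mem_fixedBlock w T)

lemma IsGapSet.fixedBlock_notMem_image_place (hT : IsGapSet w v T)
    (hQ : Q ⊆ (Icc 1 (2 * v)).powerset) : fixedBlock w T ∉ Q.image (image (place w v T)) :=
  fun h ↦ hT.zero_notMem_of_mem_image_place hQ h (zero_mem_fixedBlock w T)

lemma IsGapSet.isChordDiagram_assemble_iff (hT : IsGapSet w v T)
    (hQ : Q ⊆ (Icc 1 (2 * v)).powerset) (hd : d + 2 * v = 2 * w) :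
    IsChordDiagram (2 * w) d (assemble w v Q T) ↔ IsUniformPartition (Icc 1 (2 * v)) d Q := by
  have hcard : #(fixedBlock w T) = d := by
    have := hT.card_fixedBlock
    omega
  have huniv : univ = fixedBlock w T ∪ (Icc 1 (2 * v)).image (place w v T) := by
    rw [← hT.compl_fixedBlock, union_compl]
  rw [isChordDiagram_iff, huniv, assemble, isUniformPartition_insert_iff hcard
    hT.disjoint_fixedBlock (hT.compl_fixedBlock ▸ hT.image_place_subset_powerset hQ),
    isUniformPartition_image_iff hT.injOn_place hQ]

lemma IsGapSet.neg_invariant_assemble_iff (hT : IsGapSet w v T)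
    (hQ : Q ⊆ (Icc 1 (2 * v)).powerset) :
    (∀ b ∈ assemble w v Q T, b.image (fun x ↦ -x) ∈ assemble w v Q T) ↔
      ∀ b ∈ Q, b.image (shiftMod (2 * v) v) ∈ Q := by
  rw [assemble, forall_image_mem_insert_iff neg_injective image_neg_fixedBlock
    (hT.fixedBlock_notMem_image_place hQ)]
  exact forall_image_mem_image_iff hT.injOn_place hQ (mapsTo_shiftMod (by omega))
    fun j hj ↦ place_shiftMod hj

/-- The points `i` and `i + 1` are placed next to each other for `i ∉ T`, and on the two sides of a
gap for `i ∈ T`. -/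
lemma IsGapSet.image_place_loopless_iff (hT : IsGapSet w v T) {c : Finset ℕ}
    (hc : c ⊆ Icc 1 (2 * v)) :
    (∀ a < w, (a : ZMod (2 * w)) ∈ c.image (place w v T) →
        ((a + 1 : ℕ) : ZMod (2 * w)) ∉ c.image (place w v T)) ↔
      ∀ i ∈ Icc 1 (v - 1), i ∈ c → i + 1 ∈ c → i ∈ T := by
  constructor
  · intro h i hi hic hic'
    obtain ⟨hi_pos, hi_le⟩ := mem_Icc.1 hi
    by_contra hiT
    refine h (spread T i) (hT.spread_lt (by omega)) ?_ ?_
    · rwa [hT.spread_mem_image_place_iff hc (mem_Icc.2 ⟨hi_pos, by omega⟩)]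
    · rwa [← spread_succ_of_notMem hiT,
        hT.spread_mem_image_place_iff hc (mem_Icc.2 ⟨by omega, by omega⟩)]
  · intro h a ha hac hac'
    obtain ⟨j, hj, rfl⟩ := hT.exists_spread_eq_of_mem_image_place hc ha.le hac
    obtain ⟨j', hj', hjj'⟩ := hT.exists_spread_eq_of_mem_image_place hc ha hac'
    have hjT : j ∉ T := fun h ↦ spread_ne_of_mem_gaps (spread_succ_mem_gaps_iff.2 h) j' hjj'
    obtain rfl : j' = j + 1 :=
      (spread_strictMono T).injective (hjj'.trans (spread_succ_of_notMem hjT).symm)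
    rw [hT.spread_mem_image_place_iff hc hj] at hac
    rw [← Nat.succ_eq_add_one, ← hjj', hT.spread_mem_image_place_iff hc hj'] at hac'
    have hj_le := (mem_Icc.1 hj').2
    exact hjT (h j (mem_Icc.2 ⟨(mem_Icc.1 hj).1, by omega⟩) hac hac')

lemma IsGapSet.chordLoopless_assemble_iff (hT : IsGapSet w v T) (hv : 1 ≤ v)
    (hQ : Q ⊆ (Icc 1 (2 * v)).powerset)
    (hneg : ∀ b ∈ assemble w v Q T, b.image (fun x ↦ -x) ∈ assemble w v Q T) :
    ChordLoopless (2 * w) (assemble w v Q T) ↔ firstSectorLoops v Q ⊆ T := by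
  rw [chordLoopless_iff_of_neg_invariant hneg, assemble, forall_mem_insert, forall_mem_image,
    and_iff_right fun a ha ↦ hT.succ_notMem_fixedBlock hv ha]
  have hblocks (c) (hc : c ∈ Q) := hT.image_place_loopless_iff (mem_powerset.1 (hQ hc))
  rw [forall₂_congr hblocks]
  refine ⟨fun h i hi ↦ ?_, ?_⟩
  · obtain ⟨hi_mem, c, hc, hic, hic'⟩ := mem_filter.1 hi
    exact h c hc i hi_mem hic hic'
  · exact fun h c hc i hi hic hic' ↦ h (mem_filter.2 ⟨hi, c, hc, hic, hic'⟩)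

lemma IsGapSet.assemble_mem_reflectionDiagrams_iff (hT : IsGapSet w v T) (hv : 1 ≤ v)
    (hQ : Q ⊆ (Icc 1 (2 * v)).powerset) (hd : d + 2 * v = 2 * w) :
    assemble w v Q T ∈ reflectionDiagrams w d ↔
      IsMSymLinear d 2 v Q ∧ firstSectorLoops v Q ⊆ T := by
  rw [isMSymLinear_iff, ← hT.isChordDiagram_assemble_iff hQ hd,
    ← hT.neg_invariant_assemble_iff hQ, reflectionDiagrams, Set.mem_ofPred_eq, and_assoc]
  refine and_congr_right fun _ ↦ ?_
  rw [and_comm]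
  exact and_congr_right fun hneg ↦ hT.chordLoopless_assemble_iff hv hQ hneg

lemma IsGapSet.filter_zero_mem_assemble (hT : IsGapSet w v T)
    (hQ : Q ⊆ (Icc 1 (2 * v)).powerset) :
    {b ∈ assemble w v Q T | 0 ∈ b} = {fixedBlock w T} := by
  rw [assemble, filter_insert, if_pos (zero_mem_fixedBlock w T),
    filter_false_of_mem fun c hc ↦ hT.zero_notMem_of_mem_image_place hQ hc, insert_empty_eq]

lemma IsGapSet.assemble_erase_fixedBlock (hT : IsGapSet w v T)
    (hQ : Q ⊆ (Icc 1 (2 * v)).powerset) :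
    (assemble w v Q T).erase (fixedBlock w T) = Q.image (image (place w v T)) :=
  erase_insert (hT.fixedBlock_notMem_image_place hQ)

lemma IsGapSet.eq_of_assemble_eq {T' : Finset ℕ} {Q' : Finset (Finset ℕ)} (hT : IsGapSet w v T)
    (hT' : IsGapSet w v T') (hQ : Q ⊆ (Icc 1 (2 * v)).powerset)
    (hQ' : Q' ⊆ (Icc 1 (2 * v)).powerset) (h : assemble w v Q T = assemble w v Q' T') :
    Q = Q' ∧ T = T' := by
  obtain rfl : T = T' := by
    refine hT.eq_of_fixedBlock_eq hT' (singleton_injective ?_)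
    rw [← hT.filter_zero_mem_assemble hQ, h, hT'.filter_zero_mem_assemble hQ']
  refine ⟨image_injOn_powerset_of_injOn (image_injOn_powerset_of_injOn hT.injOn_place)
    (mem_coe.2 (mem_powerset.2 hQ)) (mem_coe.2 (mem_powerset.2 hQ')) ?_, rfl⟩
  change Q.image (image (place w v T)) = Q'.image (image (place w v T))
  rw [← hT.assemble_erase_fixedBlock hQ, h, hT.assemble_erase_fixedBlock hQ']

lemma exists_assemble_eq (hd : d + 2 * v = 2 * w) (hP : P ∈ reflectionDiagrams w d) :
    ∃ Q ⊆ (Icc 1 (2 * v)).powerset, ∃ T, IsGapSet w v T ∧ assemble w v Q T = P := by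
  obtain ⟨⟨hcard, huniq⟩, hloopless, hneg⟩ := hP
  obtain ⟨b, ⟨hb, hzero⟩, -⟩ := huniq 0
  have hb_neg : b.image (fun x ↦ -x) = b :=
    (huniq 0).unique ⟨hneg b hb, mem_image.2 ⟨0, hzero, neg_zero⟩⟩ ⟨hb, hzero⟩
  obtain ⟨T, hT, rfl⟩ := exists_isGapSet_fixedBlock_eq hb_neg hzero (by rw [hcard b hb, hd])
    fun x hx hx' ↦ hloopless x b hb hx hx'
  have hothers : P.erase (fixedBlock w T) ⊆ (fixedBlock w T)ᶜ.powerset := by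
    intro c hc
    obtain ⟨hne, hcP⟩ := mem_erase.1 hc
    refine mem_powerset.2 fun x hxc ↦ mem_compl.2 fun hxb ↦ hne ?_
    exact (huniq x).unique ⟨hcP, hxc⟩ ⟨hb, hxb⟩
  rw [hT.compl_fixedBlock, powerset_image, subset_image_iff] at hothers
  obtain ⟨Q, hQ, hQ_image⟩ := hothers
  exact ⟨Q, hQ, T, hT, by rw [assemble, hQ_image, insert_erase hb]⟩

end Assemble

section Count

lemma card_filter_product_powersetCard {α β : Type*} [DecidableEq β] (D : Finset α)
    (L : α → Finset β) {U : Finset β} (hL : ∀ a ∈ D, L a ⊆ U) (r : ℕ) :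
    #{p ∈ D ×ˢ U.powersetCard r | L p.1 ⊆ p.2} =
      ∑ k ∈ range (r + 1), (#U - k).choose (r - k) * #{a ∈ D | #(L a) = k} := by
  have hfiber : ∀ a ∈ D, #{T ∈ U.powersetCard r | L a ⊆ T} =
      ∑ k ∈ range (r + 1), if #(L a) = k then (#U - k).choose (r - k) else 0 := by
    intro a ha
    rw [sum_ite_eq]
    split_ifs with h
    · exact card_filter_powersetCard_subset _ _ _ (hL a ha) (mem_range_succ_iff.1 h)
    · refine card_eq_zero.2 (filter_eq_empty_iff.2 fun T hT hLT ↦ h (mem_range_succ_iff.2 ?_))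
      exact (mem_powersetCard.1 hT).2 ▸ card_le_card hLT
  calc #{p ∈ D ×ˢ U.powersetCard r | L p.1 ⊆ p.2}
      = ∑ a ∈ D, #{T ∈ U.powersetCard r | L a ⊆ T} := by simp only [card_filter, sum_product]
    _ = ∑ a ∈ D, ∑ k ∈ range (r + 1), if #(L a) = k then (#U - k).choose (r - k) else 0 :=
      sum_congr rfl hfiber
    _ = ∑ k ∈ range (r + 1), (#U - k).choose (r - k) * #{a ∈ D | #(L a) = k} := by
      rw [sum_comm]
      refine sum_congr rfl fun k _ ↦ ?_
      rw [← sum_filter, sum_const, smul_eq_mul, mul_comm]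

lemma ncard_reflectionDiagrams (v g : ℕ) (hv : 1 ≤ v) :
    (reflectionDiagrams (v + g + 1) (2 * (g + 1))).ncard =
      ∑ k ∈ range (g + 1), (v - 1 - k).choose (g - k) * numAtil (2 * (g + 1)) 2 v k := by
  classical
  set D : Finset (Finset (Finset ℕ)) :=
    {Q ∈ (Icc 1 (2 * v)).powerset.powerset | IsMSymLinear (2 * (g + 1)) 2 v Q}
  have hD (Q) : Q ∈ D ↔ IsMSymLinear (2 * (g + 1)) 2 v Q := by
    rw [mem_filter, mem_powerset]
    exact and_iff_right_of_imp IsMSymLinear.subset_powerset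
  have hloops : ∀ Q ∈ D, firstSectorLoops v Q ⊆ Icc 1 (v - 1) := fun Q _ ↦ filter_subset _ _
  have hcard := card_filter_product_powersetCard D (firstSectorLoops v) hloops g
  simp only [← numAtil_eq_card_filter one_le_two hD, Nat.card_Icc, Nat.add_sub_cancel] at hcard
  rw [← hcard, ← Set.ncard_coe_finset]
  set E := {p ∈ D ×ˢ powersetCard g (Icc 1 (v - 1)) | firstSectorLoops v p.1 ⊆ p.2}
  have hE (p : Finset (Finset ℕ) × Finset ℕ) : p ∈ E ↔
      (IsMSymLinear (2 * (g + 1)) 2 v p.1 ∧ firstSectorLoops v p.1 ⊆ p.2) ∧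
        IsGapSet (v + g + 1) v p.2 := by
    rw [mem_filter, mem_product, hD, isGapSet_iff_mem_powersetCard]
    exact and_right_comm
  have hd : 2 * (g + 1) + 2 * v = 2 * (v + g + 1) := by ring
  refine Eq.symm (Set.ncard_congr (fun p _ ↦ assemble (v + g + 1) v p.1 p.2) ?_ ?_ ?_)
  · intro p hp
    obtain ⟨hp_mem, hT⟩ := (hE p).1 hp
    exact (hT.assemble_mem_reflectionDiagrams_iff hv hp_mem.1.subset_powerset hd).2 hp_mem
  · intro p p' hp hp' h
    obtain ⟨⟨hQ, -⟩, hT⟩ := (hE p).1 hp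
    obtain ⟨⟨hQ', -⟩, hT'⟩ := (hE p').1 hp'
    exact Prod.ext_iff.2 (hT.eq_of_assemble_eq hT' hQ.subset_powerset hQ'.subset_powerset h)
  · intro P hP
    obtain ⟨Q, hQ, T, hT, rfl⟩ := exists_assemble_eq hd hP
    exact ⟨(Q, T), (hE _).2 ⟨(hT.assemble_mem_reflectionDiagrams_iff hv hQ hd).1 hP, hT⟩, rfl⟩

end Count

/-- for even `d ≥ 2` and `n ≥ 2`, the number of loopless generalized
chord diagrams of order `(n,d)` invariant under `i ↦ −i`. -/
theorem reflection_two_fixed_points (d : ℕ) (hd : 2 ≤ d) (hde : Even d)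
    (n : ℕ) (hn : 2 ≤ n) :
    Set.ncard {P : Finset (Finset (ZMod (n * d))) |
        IsChordDiagram (n * d) d P ∧ ChordLoopless (n * d) P ∧
          ∀ b ∈ P, b.image (fun i => -i) ∈ P} =
      ∑ k ∈ Finset.range (d / 2),
        (d * (n - 1) / 2 - 1 - k).choose (d / 2 - 1 - k) *
          numAtil d 2 (d * (n - 1) / 2) k := by
  obtain ⟨g, rfl⟩ : ∃ g, d = 2 * (g + 1) := by
    obtain ⟨h, rfl⟩ := hde
    exact ⟨h - 1, by omega⟩
  obtain ⟨m, rfl⟩ := Nat.exists_eq_add_of_le' hn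
  have hpoints : (m + 2) * (2 * (g + 1)) = 2 * ((g + 1) * (m + 1) + g + 1) := by ring
  have hv : 2 * (g + 1) * (m + 2 - 1) / 2 = (g + 1) * (m + 1) := by
    rw [mul_assoc, Nat.mul_div_cancel_left _ two_pos, Nat.add_succ_sub_one]
  have hg : 2 * (g + 1) / 2 = g + 1 := Nat.mul_div_cancel_left _ two_pos
  rw [hpoints, hv, hg, Nat.add_sub_cancel]
  exact ncard_reflectionDiagrams ((g + 1) * (m + 1)) g (Nat.mul_pos g.succ_pos m.succ_pos)
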